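/- arXiv:2212.12591 — 2 statements merged into one kernel-verified Lean document; each statement's English description precedes it below -/
import Mathlib

section
/- For all pairs x < y, z < w and u < v in X, at least one of the three commutators [e_{xy}, e_{zw}], [e_{zw}, e_{uv}] and [e_{uv}, e_{xy}] is zero in I(X,K). -/
open IncidenceAlgebra

/-- The Hom-Jacobi identity for a map `φ` on a Lie ring. -/
def HomJacobi {A : Type*} [LieRing A] (φ : A → A) : Prop :=
  ∀ a b c : A, ⁅⁅a, b⁆, φ c⁆ + ⁅⁅b, c⁆, φ a⁆ + ⁅⁅c, a⁆, φ b⁆ = 0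

/-- `φ` is a regular Hom-Lie structure: a Lie algebra automorphism satisfying Hom-Jacobi. -/
def IsRegHomLie (K : Type*) {A : Type*} [CommRing K] [LieRing A] [LieAlgebra K A]
    (φ : A → A) : Prop :=
  (∃ e : A ≃ₗ⁅K⁆ A, ⇑e = φ) ∧ HomJacobi φ

/-- The "matrix unit" `e_{xy}` of the incidence algebra, for `x ≤ y`. -/
def eSingle (K : Type*) [Field K] {X : Type*} [PartialOrder X] [DecidableEq X]
    (x y : X) (_h : x ≤ y) : IncidenceAlgebra K X where
  toFun u v := if u = x ∧ v = y then 1 else 0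
  eq_zero_of_not_le' u v huv := by
    split_ifs with h'
    · exact absurd (by rw [h'.1, h'.2]; exact _h) huv
    · rfl

/-- The multiplicative map `M_σ` on the incidence algebra: `(M_σ f)(x,y) = σ(x,y) f(x,y)`. -/
def Mmul (K : Type*) [Field K] {X : Type*} [PartialOrder X]
    (σ : X → X → K) (f : IncidenceAlgebra K X) : IncidenceAlgebra K X where
  toFun u v := σ u v * f u v
  eq_zero_of_not_le' u v huv := by
    rw [apply_eq_zero_of_not_le huv f, mul_zero]

/-- The conjugation map `ξ_β : f ↦ β f β⁻¹`. -/
noncomputable def xiMap {K : Type*} [Field K] {X : Type*} [PartialOrder X] [DecidableEq X]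
    [LocallyFiniteOrder X] (β : IncidenceAlgebra K X) :
    IncidenceAlgebra K X → IncidenceAlgebra K X :=
  fun f => β * f * Ring.inverse β

/-- `l(x,y)`: the maximal length of a chain from `x` to `y`. -/
noncomputable def chainLen {X : Type*} [PartialOrder X] (x y : X) : ℕ :=
  sSup {n : ℕ | ∃ c : Fin (n + 1) → X, StrictMono c ∧ c 0 = x ∧ c (Fin.last n) = y}

/-- `J^m`: the `K`-span of the `e_{xy}` with `x < y` and `l(x,y) ≥ m`. -/
noncomputable def Jpow (K : Type*) [Field K] {X : Type*} [PartialOrder X] [DecidableEq X]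
    (m : ℕ) : Submodule K (IncidenceAlgebra K X) :=
  Submodule.span K {f | ∃ x y, ∃ h : x < y, m ≤ chainLen x y ∧ f = eSingle K x y h.le}


/-!
If `[e_{xy}, e_{zw}] ≠ 0` with `x < y` and `z < w`, then `y = z` or `w = x`, so three pairwise
non-commuting matrix units would form a triangle in the shift graph of `X`. There is none: orient
each edge towards the pair that starts at the common point. An oriented path `p → q → r` has `p`
strictly below `r`, so `p` and `r` are not adjacent, and two out-neighbours (or two in-neighbours)
of a vertex share an endpoint, hence are not adjacent either.
-/

section ShiftGraph

variable {X : Type*} [Preorder X]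

variable (X) in
/-- The shift graph of a preorder: its vertices are the pairs `(x, y)` with `x < y`, two of them
being joined when one ends where the other begins. Over a partial order, it records which of the
matrix units `e_{xy}` with `x < y` fail to commute. -/
def shiftGraph : SimpleGraph {p : X × X // p.1 < p.2} where
  Adj p q := p.1.2 = q.1.1 ∨ q.1.2 = p.1.1
  symm := ⟨fun _ _ => Or.symm⟩
  loopless := ⟨fun p h => h.elim p.2.ne' p.2.ne'⟩

namespace shiftGraph

variable {p q r : {p : X × X // p.1 < p.2}}

theorem not_adj_of_fst_eq (h : p.1.1 = q.1.1) : ¬(shiftGraph X).Adj p q := by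
  rintro (hpq | hqp)
  · exact p.2.ne' (hpq.trans h.symm)
  · exact q.2.ne' (hqp.trans h)

theorem not_adj_of_snd_eq (h : p.1.2 = q.1.2) : ¬(shiftGraph X).Adj p q := by
  rintro (hpq | hqp)
  · exact q.2.ne (hpq.symm.trans h)
  · exact p.2.ne (hqp.symm.trans h.symm)

theorem not_adj_of_snd_eq_fst (hpq : p.1.2 = q.1.1) (hqr : q.1.2 = r.1.1) :
    ¬(shiftGraph X).Adj p r := by
  have hlt : p.1.2 < r.1.1 := by rw [hpq, ← hqr]; exact q.2
  rintro (hpr | hrp)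
  · exact hlt.ne hpr
  · exact ((p.2.trans hlt).trans r.2).ne' hrp

theorem cliqueFree_three : (shiftGraph X).CliqueFree 3 := by
  classical
  intro s hs
  obtain ⟨p, q, r, hpq, hpr, hqr, -⟩ := SimpleGraph.is3Clique_iff.1 hs
  rcases hpq with hpq | hqp <;> rcases hpr with hpr | hrp
  · exact not_adj_of_fst_eq (hpq.symm.trans hpr) hqr
  · exact not_adj_of_snd_eq_fst hrp hpq hqr.symm
  · exact not_adj_of_snd_eq_fst hqp hpr hqr
  · exact not_adj_of_snd_eq (hqp.trans hrp.symm) hqr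

end shiftGraph

end ShiftGraph

section MatrixUnits

variable {K : Type*} [Field K] {X : Type*} [PartialOrder X] [DecidableEq X]

theorem eSingle_apply {x y : X} (hxy : x ≤ y) (a b : X) :
    eSingle K x y hxy a b = if a = x ∧ b = y then 1 else 0 :=
  rfl

variable [LocallyFiniteOrder X]

theorem eSingle_mul_eSingle_of_ne {x y z w : X} (hxy : x ≤ y) (hzw : z ≤ w) (hyz : y ≠ z) :
    eSingle K x y hxy * eSingle K z w hzw = 0 := by
  ext a b _
  rw [mul_apply, IncidenceAlgebra.zero_apply]
  refine Finset.sum_eq_zero fun t _ => ?_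
  rw [eSingle_apply, eSingle_apply, ite_zero_mul_ite_zero, if_neg]
  rintro ⟨⟨-, hty⟩, htz, -⟩
  exact hyz (hty.symm.trans htz)

theorem lie_eSingle_eSingle_of_ne {x y z w : X} (hxy : x ≤ y) (hzw : z ≤ w)
    (hyz : y ≠ z) (hwx : w ≠ x) : ⁅eSingle K x y hxy, eSingle K z w hzw⁆ = 0 := by
  rw [Ring.lie_def, eSingle_mul_eSingle_of_ne _ _ hyz, eSingle_mul_eSingle_of_ne _ _ hwx, sub_zero]

theorem shiftGraph.adj_of_lie_eSingle_ne_zero {p q : {p : X × X // p.1 < p.2}}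
    (h : ⁅eSingle K p.1.1 p.1.2 p.2.le, eSingle K q.1.1 q.1.2 q.2.le⁆ ≠ 0) :
    (shiftGraph X).Adj p q := by
  contrapose! h
  obtain ⟨hpq, hqp⟩ := not_or.1 h
  exact lie_eSingle_eSingle_of_ne _ _ hpq hqp

end MatrixUnits

theorem stmt2_general {K : Type*} [Field K] {X : Type*} [PartialOrder X] [DecidableEq X]
    [LocallyFiniteOrder X] {x y z w u v : X} (hxy : x < y) (hzw : z < w) (huv : u < v) :
    ⁅eSingle K x y hxy.le, eSingle K z w hzw.le⁆ = 0 ∨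
    ⁅eSingle K z w hzw.le, eSingle K u v huv.le⁆ = 0 ∨
    ⁅eSingle K u v huv.le, eSingle K x y hxy.le⁆ = 0 := by
  by_contra! ⟨hpq, hqr, hrp⟩
  let p : {p : X × X // p.1 < p.2} := ⟨(x, y), hxy⟩
  let q : {p : X × X // p.1 < p.2} := ⟨(z, w), hzw⟩
  let r : {p : X × X // p.1 < p.2} := ⟨(u, v), huv⟩
  have adj_pq : (shiftGraph X).Adj p q := shiftGraph.adj_of_lie_eSingle_ne_zero hpq
  have adj_qr : (shiftGraph X).Adj q r := shiftGraph.adj_of_lie_eSingle_ne_zero hqr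
  have adj_rp : (shiftGraph X).Adj r p := shiftGraph.adj_of_lie_eSingle_ne_zero hrp
  exact shiftGraph.cliqueFree_three {p, q, r}
    (SimpleGraph.is3Clique_triple_iff.2 ⟨adj_pq, adj_rp.symm, adj_qr⟩)

theorem stmt2 {K : Type*} [Field K] {X : Type*} [PartialOrder X] [Fintype X] [DecidableEq X]
    [LocallyFiniteOrder X]
    {x y z w u v : X} (hxy : x < y) (hzw : z < w) (huv : u < v) :
    ⁅eSingle K x y hxy.le, eSingle K z w hzw.le⁆ = 0 ∨
    ⁅eSingle K z w hzw.le, eSingle K u v huv.le⁆ = 0 ∨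
    ⁅eSingle K u v huv.le, eSingle K x y hxy.le⁆ = 0 :=
  stmt2_general hxy hzw huv
end

section
/- Let ρ ∈ J(I(X,K)) and β = δ + ρ. Then β is a unit of I(X,K), and the inner automorphism ξ_β : f ↦ βfβ⁻¹ is a regular Hom-Lie structure on I(X,K) if and only if ρ(x,y) = 0 for every x < y such that x ∉ Min(X) or y ∉ Max(X) (i.e., if and only if ρ ∈ Z(J(I(X,K)))). -/
open IncidenceAlgebra

attribute [local instance 100] LieRing.ofAssociativeRing

/-!
If `ρ` vanishes on the diagonal, every entry of `∑ (-ρ) ^ n` has finitely many nonzero terms, so the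
series defines `γ = (1 + ρ)⁻¹`. Write `e_z` and `e_{xy}` for the matrix units and `ξ` for
conjugation by `β = 1 + ρ`.

Hom-Jacobi at `(e_x, e_{xy}, e_z)` with `z ∉ {x, y}` says that `e_{xy}` commutes with `ξ e_z`, whose
`(u, v)` entry is `β u z * γ z v`. For `w < x < y` the pair `e_{wx}`, `ξ e_y` gives `β x y = 0`; for
`x < y < w` the pair `e_{yw}`, `ξ e_x` gives `γ x y = 0`, and `β * γ = 1` transfers this to `β x y`.

Conversely, if `ρ` lives on pairs (minimal, maximal), then so does `ξ c - c = (ρ c - c ρ) γ`. Such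
elements commute with everything vanishing on the diagonal, in particular with all commutators, so
Hom-Jacobi for `ξ` reduces to the ordinary Jacobi identity.
-/

section LieRing

theorem homJacobi_of_lie_sub_eq_zero {A : Type*} [LieRing A] {φ : A → A}
    (h : ∀ a b c : A, ⁅⁅a, b⁆, φ c - c⁆ = 0) : HomJacobi φ := by
  have lie_map (a b c : A) : ⁅⁅a, b⁆, φ c⁆ = -⁅c, ⁅a, b⁆⁆ := by
    rw [lie_skew, ← sub_eq_zero, ← lie_sub, h]
  intro a b c
  rw [lie_map, lie_map, lie_map, ← neg_add, ← neg_add, lie_jacobi, neg_zero]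

theorem exists_lieEquiv_coe_eq_conj (K : Type*) {A : Type*} [CommRing K] [Ring A] [Algebra K A]
    (u : Aˣ) : ∃ e : A ≃ₗ⁅K⁆ A, ⇑e = fun a : A => u * a * ↑u⁻¹ :=
  ⟨(MulSemiringAction.toAlgEquiv K A (ConjAct.toConjAct u)).toLieEquiv, rfl⟩

end LieRing

section Diagonal

variable {R X : Type*} [PartialOrder X] [LocallyFiniteOrder X]

theorem mul_apply_self [NonUnitalNonAssocSemiring R] (f g : IncidenceAlgebra R X) (x : X) :
    (f * g) x x = f x x * g x x := by
  rw [mul_apply, Finset.Icc_self, Finset.sum_singleton]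

theorem lie_apply_self [CommRing R] [DecidableEq X] (f g : IncidenceAlgebra R X) (x : X) :
    ⁅f, g⁆ x x = 0 := by
  rw [LieRing.of_associative_ring_bracket, IncidenceAlgebra.sub_apply, mul_apply_self,
    mul_apply_self, mul_comm, sub_self]

theorem apply_self_mul_apply_self_eq_one [NonAssocSemiring R] [DecidableEq X]
    {f g : IncidenceAlgebra R X} (hfg : f * g = 1) (x : X) : f x x * g x x = 1 := by
  rw [← mul_apply_self, hfg, one_apply, if_pos rfl]

theorem apply_eq_zero_of_mul_eq_one [CommSemiring R] [DecidableEq X] {f g : IncidenceAlgebra R X}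
    (hfg : f * g = 1) {x y : X} (hxy : x < y) (hg : ∀ z, x ≤ z → z < y → g z y = 0) :
    f x y = 0 := by
  have diag : f y y * g y y = 1 := apply_self_mul_apply_self_eq_one hfg y
  have entry : f x y * g y y = 0 := by
    calc f x y * g y y = (f * g) x y := by
          rw [mul_apply, Finset.sum_eq_single_of_mem y (Finset.right_mem_Icc.2 hxy.le)]
          intro z hz hzy
          obtain ⟨hxz, hzy'⟩ := Finset.mem_Icc.1 hz
          rw [hg z hxz (hzy'.lt_of_ne hzy), mul_zero]
      _ = 0 := by rw [hfg, one_apply, if_neg hxy.ne]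
  exact (IsUnit.of_mul_eq_one_right _ diag).mul_left_eq_zero.1 entry

end Diagonal

section GeomSeries

variable {R X : Type*} [PartialOrder X] [LocallyFiniteOrder X] [DecidableEq X]

theorem pow_apply_eq_zero_of_card_Icc_le [Semiring R] {f : IncidenceAlgebra R X}
    (hf : ∀ x, f x x = 0) {n : ℕ} {x y : X} (hn : (Finset.Icc x y).card ≤ n) :
    (f ^ n) x y = 0 := by
  induction n generalizing y with
  | zero =>
    have hxy : ¬x ≤ y := Finset.Icc_eq_empty_iff.1 (Finset.card_eq_zero.1 (Nat.le_zero.1 hn))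
    exact apply_eq_zero_of_not_le hxy _
  | succ n ih =>
    rw [pow_succ, mul_apply]
    refine Finset.sum_eq_zero fun z hz => ?_
    obtain ⟨hxz, hzy⟩ := Finset.mem_Icc.1 hz
    obtain rfl | hzy := hzy.eq_or_lt
    · rw [hf, mul_zero]
    · have hcard : (Finset.Icc x z).card < (Finset.Icc x y).card :=
        Finset.card_lt_card (Finset.Icc_ssubset_Icc_right (hxz.trans hzy.le) le_rfl hzy)
      rw [ih (by omega), zero_mul]

/-- The geometric series `∑ f ^ n`, for `f` vanishing on the diagonal. The entry at `(x, y)` is cut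
off at `n = #[x, y]`, from which point on the terms are zero. -/
def geomSeries [Semiring R] (f : IncidenceAlgebra R X) : IncidenceAlgebra R X where
  toFun x y := (∑ n ∈ Finset.range (Finset.Icc x y).card, f ^ n) x y
  eq_zero_of_not_le' _ _ hxy := apply_eq_zero_of_not_le hxy _

theorem geomSeries_apply_of_card_Icc_le [Semiring R] {f : IncidenceAlgebra R X}
    (hf : ∀ x, f x x = 0) {N : ℕ} {x y : X} (hN : (Finset.Icc x y).card ≤ N) :
    geomSeries f x y = (∑ n ∈ Finset.range N, f ^ n) x y := by
  induction N, hN using Nat.le_induction with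
  | base => rfl
  | succ N hN ih =>
    rw [Finset.sum_range_succ, IncidenceAlgebra.add_apply,
      pow_apply_eq_zero_of_card_Icc_le hf hN, add_zero, ih]

theorem one_sub_mul_geomSeries [Ring R] {f : IncidenceAlgebra R X} (hf : ∀ x, f x x = 0) :
    (1 - f) * geomSeries f = 1 := by
  ext x y _
  set N := (Finset.Icc x y).card
  calc ((1 - f) * geomSeries f) x y = ((1 - f) * ∑ n ∈ Finset.range N, f ^ n) x y := by
        rw [mul_apply, mul_apply]
        refine Finset.sum_congr rfl fun z hz => ?_
        rw [geomSeries_apply_of_card_Icc_le hf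
          (Finset.card_le_card (Finset.Icc_subset_Icc_left (Finset.mem_Icc.1 hz).1))]
    _ = (1 : IncidenceAlgebra R X) x y := by
        rw [mul_neg_geom_sum, IncidenceAlgebra.sub_apply,
          pow_apply_eq_zero_of_card_Icc_le hf le_rfl, sub_zero]

theorem geomSeries_mul_one_sub [Ring R] {f : IncidenceAlgebra R X} (hf : ∀ x, f x x = 0) :
    geomSeries f * (1 - f) = 1 := by
  ext x y _
  set N := (Finset.Icc x y).card
  calc (geomSeries f * (1 - f)) x y = ((∑ n ∈ Finset.range N, f ^ n) * (1 - f)) x y := by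
        rw [mul_apply, mul_apply]
        refine Finset.sum_congr rfl fun z hz => ?_
        rw [geomSeries_apply_of_card_Icc_le hf
          (Finset.card_le_card (Finset.Icc_subset_Icc_right (Finset.mem_Icc.1 hz).2))]
    _ = (1 : IncidenceAlgebra R X) x y := by
        rw [geom_sum_mul_neg, IncidenceAlgebra.sub_apply,
          pow_apply_eq_zero_of_card_Icc_le hf le_rfl, sub_zero]

theorem isUnit_one_add_of_apply_self_eq_zero [Ring R] {f : IncidenceAlgebra R X}
    (hf : ∀ x, f x x = 0) : IsUnit (1 + f) := by
  have hneg (x : X) : (-f) x x = 0 := by rw [IncidenceAlgebra.neg_apply, hf, neg_zero]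
  rw [← sub_neg_eq_add]
  exact ⟨⟨_, _, one_sub_mul_geomSeries hneg, geomSeries_mul_one_sub hneg⟩, rfl⟩

end GeomSeries

section MatUnit

variable {X : Type*} [PartialOrder X] [DecidableEq X]

/-- The matrix unit `e_{xy}` for `x ≤ y`; unlike `eSingle` it does not require the coefficients to
form a field. -/
def matUnit (R : Type*) [Zero R] [One R] {x y : X} (h : x ≤ y) : IncidenceAlgebra R X where
  toFun u v := if u = x ∧ v = y then 1 else 0
  eq_zero_of_not_le' _ _ huv := if_neg fun ⟨hu, hv⟩ => huv (by rwa [hu, hv])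

theorem matUnit_apply (R : Type*) [Zero R] [One R] {x y : X} (h : x ≤ y) (u v : X) :
    matUnit R h u v = if u = x ∧ v = y then 1 else 0 :=
  rfl

variable {R : Type*} [LocallyFiniteOrder X]

section NonAssocSemiring

variable [NonAssocSemiring R] {x y z w : X}

theorem matUnit_mul_apply (h : x ≤ y) (f : IncidenceAlgebra R X) (u v : X) :
    (matUnit R h * f) u v = if u = x then f y v else 0 := by
  simp only [mul_apply, matUnit_apply, ite_and, ite_mul, one_mul, zero_mul]
  split_ifs with hu
  · subst hu
    rw [Finset.sum_ite_eq', ite_eq_left_iff, Finset.mem_Icc]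
    exact fun hy => (apply_eq_zero_of_not_le (fun hyv => hy ⟨h, hyv⟩) f).symm
  · exact Finset.sum_const_zero

theorem mul_matUnit_apply (h : x ≤ y) (f : IncidenceAlgebra R X) (u v : X) :
    (f * matUnit R h) u v = if v = y then f u x else 0 := by
  simp only [mul_apply, matUnit_apply, and_comm, ite_and, mul_ite, mul_one, mul_zero]
  split_ifs with hv
  · subst hv
    rw [Finset.sum_ite_eq', ite_eq_left_iff, Finset.mem_Icc]
    exact fun hx => (apply_eq_zero_of_not_le (fun hux => hx ⟨hux, h⟩) f).symm
  · exact Finset.sum_const_zero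

theorem matUnit_mul_matUnit_same (hxy : x ≤ y) (hyz : y ≤ z) :
    matUnit R hxy * matUnit R hyz = matUnit R (hxy.trans hyz) := by
  ext u v _
  simp only [matUnit_mul_apply, matUnit_apply, true_and, ite_and]

theorem matUnit_mul_matUnit_of_ne (hxy : x ≤ y) (hzw : z ≤ w) (hyz : y ≠ z) :
    matUnit R hxy * matUnit R hzw = 0 := by
  ext u v _
  simp only [matUnit_mul_apply, matUnit_apply, hyz, false_and, if_false, ite_self,
    IncidenceAlgebra.zero_apply]

theorem apply_eq_zero_of_commute_matUnit_of_ne_right {h : x ≤ y} {f : IncidenceAlgebra R X}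
    (hf : Commute (matUnit R h) f) {v : X} (hv : v ≠ y) : f y v = 0 := by
  have := congrArg (fun g : IncidenceAlgebra R X => g x v) hf.eq
  simpa only [matUnit_mul_apply, mul_matUnit_apply, if_true, if_neg hv] using this

theorem apply_eq_zero_of_commute_matUnit_of_ne_left {h : x ≤ y} {f : IncidenceAlgebra R X}
    (hf : Commute (matUnit R h) f) {u : X} (hu : u ≠ x) : f u x = 0 := by
  have := congrArg (fun g : IncidenceAlgebra R X => g u y) hf.eq
  simpa only [matUnit_mul_apply, mul_matUnit_apply, if_true, if_neg hu] using this.symm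

end NonAssocSemiring

theorem mul_matUnit_mul_apply [Semiring R] {x y : X} (f : IncidenceAlgebra R X) (h : x ≤ y)
    (g : IncidenceAlgebra R X) (u v : X) : (f * matUnit R h * g) u v = f u x * g y v := by
  rw [mul_assoc, mul_apply]
  simp only [matUnit_mul_apply, mul_ite, mul_zero, Finset.sum_ite_eq', Finset.mem_Icc,
    ite_eq_left_iff]
  intro hx
  by_contra hne
  exact hx ⟨le_of_ne_zero (left_ne_zero_of_mul (Ne.symm hne)),
    h.trans (le_of_ne_zero (right_ne_zero_of_mul (Ne.symm hne)))⟩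

namespace HomJacobi

theorem commute_matUnit [Ring R] {φ : IncidenceAlgebra R X → IncidenceAlgebra R X}
    (hφ : HomJacobi φ) {x y z : X} (hxy : x < y) (hzx : z ≠ x) (hzy : z ≠ y) :
    Commute (matUnit R hxy.le) (φ (matUnit R (le_refl z))) := by
  have lie_x_xy : ⁅matUnit R (le_refl x), matUnit R hxy.le⁆ = matUnit R hxy.le := by
    rw [LieRing.of_associative_ring_bracket, matUnit_mul_matUnit_same,
      matUnit_mul_matUnit_of_ne _ _ hxy.ne', sub_zero]
  have lie_xy_z : ⁅matUnit R hxy.le, matUnit R (le_refl z)⁆ = 0 := by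
    rw [LieRing.of_associative_ring_bracket, matUnit_mul_matUnit_of_ne _ _ hzy.symm,
      matUnit_mul_matUnit_of_ne _ _ hzx, sub_zero]
  have lie_z_x : ⁅matUnit R (le_refl z), matUnit R (le_refl x)⁆ = 0 := by
    rw [LieRing.of_associative_ring_bracket, matUnit_mul_matUnit_of_ne _ _ hzx,
      matUnit_mul_matUnit_of_ne _ _ hzx.symm, sub_zero]
  have := hφ (matUnit R (le_refl x)) (matUnit R hxy.le) (matUnit R (le_refl z))
  rwa [lie_x_xy, lie_xy_z, lie_z_x, zero_lie, zero_lie, add_zero, add_zero,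
    LieRing.of_associative_ring_bracket, sub_eq_zero] at this

variable [CommRing R] {β γ : IncidenceAlgebra R X} {x y : X}

theorem apply_eq_zero_of_not_isMin (h : HomJacobi fun f => β * f * γ) (hβγ : β * γ = 1)
    (hxy : x < y) (hx : ¬IsMin x) : β x y = 0 := by
  obtain ⟨w, hwx⟩ := not_isMin_iff.1 hx
  have entry : β x y * γ y y = 0 := by
    rw [← mul_matUnit_mul_apply β (le_refl y) γ]
    exact apply_eq_zero_of_commute_matUnit_of_ne_right
      (h.commute_matUnit hwx (hwx.trans hxy).ne' hxy.ne') hxy.ne'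
  have diag : β y y * γ y y = 1 := apply_self_mul_apply_self_eq_one hβγ y
  exact (IsUnit.of_mul_eq_one_right _ diag).mul_left_eq_zero.1 entry

theorem inv_apply_eq_zero_of_not_isMax (h : HomJacobi fun f => β * f * γ) (hβγ : β * γ = 1)
    (hxy : x < y) (hy : ¬IsMax y) : γ x y = 0 := by
  obtain ⟨w, hyw⟩ := not_isMax_iff.1 hy
  have entry : β x x * γ x y = 0 := by
    rw [← mul_matUnit_mul_apply β (le_refl x) γ]
    exact apply_eq_zero_of_commute_matUnit_of_ne_left
      (h.commute_matUnit hyw hxy.ne (hxy.trans hyw).ne) hxy.ne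
  have diag : β x x * γ x x = 1 := apply_self_mul_apply_self_eq_one hβγ x
  exact (IsUnit.of_mul_eq_one _ diag).mul_right_eq_zero.1 entry

theorem apply_eq_zero (h : HomJacobi fun f => β * f * γ) (hβγ : β * γ = 1)
    (hxy : x < y) (hne : ¬IsMin x ∨ ¬IsMax y) : β x y = 0 := by
  obtain hx | hy := hne
  · exact h.apply_eq_zero_of_not_isMin hβγ hxy hx
  · exact apply_eq_zero_of_mul_eq_one hβγ hxy fun z _ hzy =>
      h.inv_apply_eq_zero_of_not_isMax hβγ hzy hy

end HomJacobi

end MatUnit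

section MinMaxSupported

variable {R X : Type*} [PartialOrder X]

/-- Membership in the centre `Z(J)` of the Jacobson radical: `f` is zero except at pairs `x < y`
with `x` minimal and `y` maximal. -/
structure MinMaxSupported [Zero R] (f : IncidenceAlgebra R X) : Prop where
  apply_self : ∀ x, f x x = 0
  apply_of_lt : ∀ x y, x < y → (¬IsMin x ∨ ¬IsMax y) → f x y = 0

namespace MinMaxSupported

theorem apply_of_not_isMin [Zero R] {f : IncidenceAlgebra R X} (hf : MinMaxSupported f) {x : X}
    (hx : ¬IsMin x) (y : X) : f x y = 0 := by
  by_contra h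
  obtain rfl | hxy := (le_of_ne_zero h).eq_or_lt
  · exact h (hf.apply_self x)
  · exact h (hf.apply_of_lt x y hxy (.inl hx))

theorem apply_of_not_isMax [Zero R] {f : IncidenceAlgebra R X} (hf : MinMaxSupported f) {y : X}
    (hy : ¬IsMax y) (x : X) : f x y = 0 := by
  by_contra h
  obtain rfl | hxy := (le_of_ne_zero h).eq_or_lt
  · exact h (hf.apply_self x)
  · exact h (hf.apply_of_lt x y hxy (.inr hy))

theorem sub [AddGroup R] {f g : IncidenceAlgebra R X} (hf : MinMaxSupported f)
    (hg : MinMaxSupported g) : MinMaxSupported (f - g) where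
  apply_self x := by rw [IncidenceAlgebra.sub_apply, hf.apply_self, hg.apply_self, sub_zero]
  apply_of_lt x y hxy h := by
    rw [IncidenceAlgebra.sub_apply, hf.apply_of_lt x y hxy h, hg.apply_of_lt x y hxy h, sub_zero]

variable [LocallyFiniteOrder X]

section NonUnitalNonAssocSemiring

variable [NonUnitalNonAssocSemiring R] {f : IncidenceAlgebra R X}

theorem mul_apply_right (hf : MinMaxSupported f) (g : IncidenceAlgebra R X) (x y : X) :
    (f * g) x y = f x y * g y y := by
  by_cases hxy : x ≤ y
  · rw [mul_apply]
    refine Finset.sum_eq_single_of_mem y (Finset.right_mem_Icc.2 hxy) fun z hz hzy => ?_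
    have hz_max : ¬IsMax z := not_isMax_of_lt ((Finset.mem_Icc.1 hz).2.lt_of_ne hzy)
    rw [hf.apply_of_not_isMax hz_max, zero_mul]
  · rw [apply_eq_zero_of_not_le hxy, apply_eq_zero_of_not_le hxy, zero_mul]

theorem mul_apply_left (hf : MinMaxSupported f) (g : IncidenceAlgebra R X) (x y : X) :
    (g * f) x y = g x x * f x y := by
  by_cases hxy : x ≤ y
  · rw [mul_apply]
    refine Finset.sum_eq_single_of_mem x (Finset.left_mem_Icc.2 hxy) fun z hz hzx => ?_
    have hz_min : ¬IsMin z := not_isMin_of_lt ((Finset.mem_Icc.1 hz).1.lt_of_ne' hzx)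
    rw [hf.apply_of_not_isMin hz_min, mul_zero]
  · rw [apply_eq_zero_of_not_le hxy, apply_eq_zero_of_not_le hxy, mul_zero]

theorem mul_right (hf : MinMaxSupported f) (g : IncidenceAlgebra R X) :
    MinMaxSupported (f * g) where
  apply_self x := by rw [hf.mul_apply_right, hf.apply_self, zero_mul]
  apply_of_lt x y hxy h := by rw [hf.mul_apply_right, hf.apply_of_lt x y hxy h, zero_mul]

theorem mul_left (hf : MinMaxSupported f) (g : IncidenceAlgebra R X) :
    MinMaxSupported (g * f) where
  apply_self x := by rw [hf.mul_apply_left, hf.apply_self, mul_zero]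
  apply_of_lt x y hxy h := by rw [hf.mul_apply_left, hf.apply_of_lt x y hxy h, mul_zero]

end NonUnitalNonAssocSemiring

variable [DecidableEq X]

theorem lie_eq_zero [Ring R] {f g : IncidenceAlgebra R X} (hf : MinMaxSupported f)
    (hg : ∀ x, g x x = 0) : ⁅g, f⁆ = 0 := by
  ext x y _
  rw [LieRing.of_associative_ring_bracket, IncidenceAlgebra.sub_apply, hf.mul_apply_left,
    hf.mul_apply_right, hg, hg, zero_mul, mul_zero, sub_zero, IncidenceAlgebra.zero_apply]

theorem conj_sub_self [Ring R] {ρ γ : IncidenceAlgebra R X} (hρ : MinMaxSupported ρ)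
    (hγ : (1 + ρ) * γ = 1) (f : IncidenceAlgebra R X) :
    MinMaxSupported ((1 + ρ) * f * γ - f) := by
  have factor : (1 + ρ) * f * γ - f = (ρ * f - f * ρ) * γ := by
    calc (1 + ρ) * f * γ - f = (1 + ρ) * f * γ - f * ((1 + ρ) * γ) := by rw [hγ, mul_one]
      _ = (ρ * f - f * ρ) * γ := by noncomm_ring
  rw [factor]
  exact ((hρ.mul_right f).sub (hρ.mul_left f)).mul_right γ

theorem homJacobi_conj [CommRing R] {ρ γ : IncidenceAlgebra R X} (hρ : MinMaxSupported ρ)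
    (hγ : (1 + ρ) * γ = 1) : HomJacobi fun f => (1 + ρ) * f * γ :=
  homJacobi_of_lie_sub_eq_zero fun a b c =>
    (hρ.conj_sub_self hγ c).lie_eq_zero (lie_apply_self a b)

end MinMaxSupported

end MinMaxSupported

theorem stmt5_general {R X : Type*} [CommRing R] [PartialOrder X] [DecidableEq X]
    [LocallyFiniteOrder X] (ρ : IncidenceAlgebra R X) (hρ : ∀ x : X, ρ x x = 0) :
    IsUnit (1 + ρ) ∧
      (IsRegHomLie R (fun f => (1 + ρ) * f * Ring.inverse (1 + ρ)) ↔
        ∀ x y : X, x < y → (¬IsMin x ∨ ¬IsMax y) → ρ x y = 0) := by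
  have hunit : IsUnit (1 + ρ) := isUnit_one_add_of_apply_self_eq_zero hρ
  have hinv : (1 + ρ) * Ring.inverse (1 + ρ) = 1 := Ring.mul_inverse_cancel _ hunit
  refine ⟨hunit, fun ⟨_, hJacobi⟩ x y hxy hne => ?_, fun h => ⟨?_, ?_⟩⟩
  · simpa only [IncidenceAlgebra.add_apply, one_apply, if_neg hxy.ne, zero_add] using
      hJacobi.apply_eq_zero hinv hxy hne
  · obtain ⟨u, hu⟩ := hunit
    simpa only [← hu, Ring.inverse_unit] using exists_lieEquiv_coe_eq_conj R u
  · exact MinMaxSupported.homJacobi_conj ⟨hρ, h⟩ hinv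

theorem stmt5 {K : Type*} [Field K] {X : Type*} [PartialOrder X] [Fintype X] [DecidableEq X]
    [LocallyFiniteOrder X]
    (hcard : 1 < Fintype.card X)
    (hconn : ∀ x y : X, Relation.ReflTransGen (fun a b : X => a ≤ b ∨ b ≤ a) x y)
    (ρ : IncidenceAlgebra K X) (hρ : ∀ x : X, ρ x x = 0) :
    IsUnit (1 + ρ) ∧
      (IsRegHomLie K (xiMap (1 + ρ)) ↔
        ∀ x y : X, x < y → (¬IsMin x ∨ ¬IsMax y) → ρ x y = 0) :=
  stmt5_general ρ hρ
end
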